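/- arXiv:2411.06745 — 4 statements merged into one kernel-verified Lean document; each statement's English description precedes it below -/
import Mathlib

section
/- Let K be a field of characteristic not equal to 2, c ∈ K, f(z) = z² + c, let y be an element of a fixed algebraic closure of K, and let m ≥ 1 be an integer. Suppose α_1, …, α_{2^{m−1}} are elements of the algebraic closure such that the multiset of roots of f^m(z) − y, counted with multiplicity, is exactly {α_1, −α_1, α_2, −α_2, …, α_{2^{m−1}}, −α_{2^{m−1}}}. Then (α_1 α_2 ⋯ α_{2^{m−1}})² = f^m(0) − y if m ≥ 2, and (α_1)² = y − f(0) if m = 1. -/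
open Polynomial

/-! The polynomial `f^m - y` is monic of degree `2^m`, the number of the prescribed roots, so it
equals `∏ (X - α i) (X + α i) = ∏ (X ^ 2 - α i ^ 2)`. At `0` this gives
`f^m(0) - y = (-1)^(2^(m-1)) (∏ α i) ^ 2`, and the exponent `2^(m-1)` is odd only for `m = 1`. -/

theorem eq_iterate_of_succ {A : Type*} {g : A → A} {u : ℕ → A} {a : A} (h0 : u 0 = a)
    (hsucc : ∀ n, u (n + 1) = g (u n)) (n : ℕ) : u n = g^[n] a := by
  induction n with
  | zero => exact h0
  | succ n ih => rw [hsucc, ih, Function.iterate_succ_apply']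

theorem monic_iterate_comp {R : Type*} [Semiring R] [NoZeroDivisors R] {p q : R[X]}
    (hp : p.Monic) (hq : q.Monic) (hp0 : p.natDegree ≠ 0) (hq0 : q.natDegree ≠ 0) (n : ℕ) :
    (p.comp^[n] q).Monic := by
  induction n with
  | zero => exact hq
  | succ n ih =>
    have hn : (p.comp^[n] q).natDegree ≠ 0 := by
      rw [natDegree_iterate_comp]
      exact mul_ne_zero (pow_ne_zero n hp0) hq0
    rw [Function.iterate_succ_apply']
    exact hp.comp ih hn

theorem monic_sub_C {R : Type*} [Ring R] {p : R[X]} (hp : p.Monic) (hp0 : p.natDegree ≠ 0)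
    (a : R) : (p - C a).Monic :=
  hp.sub_of_left <| degree_C_le.trans_lt <| natDegree_pos_iff_degree_pos.mp <|
    Nat.pos_of_ne_zero hp0

section SymmetricRoots

variable {R ι : Type*} [CommRing R] [IsDomain R] [Fintype ι] {α : ι → R} {p : R[X]}

theorem eq_prod_X_sq_sub_C_sq_of_roots_eq_pm (hp : p.Monic)
    (hdeg : p.natDegree = 2 * Fintype.card ι)
    (hroots : p.roots = Finset.univ.val.map α + Finset.univ.val.map fun i => -α i) :
    p = ∏ i, (X ^ 2 - C (α i ^ 2)) := by
  have hcard : p.roots.card = p.natDegree := by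
    simp [hroots, hdeg, two_mul]
  calc
    p = (p.roots.map fun a => X - C a).prod :=
      (prod_multiset_X_sub_C_of_monic_of_roots_card_eq hp hcard).symm
    _ = (∏ i, (X - C (α i))) * ∏ i, (X - C (-α i)) := by
      simp [hroots]
    _ = ∏ i, (X ^ 2 - C (α i ^ 2)) := by
      rw [← Finset.prod_mul_distrib]
      refine Finset.prod_congr rfl fun i _ => ?_
      rw [C_neg, C_pow]
      ring

theorem prod_sq_eq_neg_one_pow_mul_eval_zero_of_roots_eq_pm (hp : p.Monic)
    (hdeg : p.natDegree = 2 * Fintype.card ι)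
    (hroots : p.roots = Finset.univ.val.map α + Finset.univ.val.map fun i => -α i) :
    (∏ i, α i) ^ 2 = (-1) ^ Fintype.card ι * p.eval 0 := by
  have heval : p.eval 0 = (-1) ^ Fintype.card ι * (∏ i, α i) ^ 2 := by
    rw [eq_prod_X_sq_sub_C_sq_of_roots_eq_pm hp hdeg hroots]
    simp [eval_prod, Finset.prod_neg, Finset.prod_pow]
  rw [heval, ← mul_assoc, ← mul_pow, neg_one_mul, neg_neg, one_pow, one_mul]

theorem prod_sq_of_roots_iterate_comp_sub_C_eq_pm (hp : p.Monic)
    (hp0 : p.natDegree ≠ 0) (y : R) {m : ℕ} (hdeg : p.natDegree ^ m = 2 * Fintype.card ι)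
    (hroots : (p.comp^[m] X - C y).roots =
      Finset.univ.val.map α + Finset.univ.val.map fun i => -α i) :
    (∏ i, α i) ^ 2 = (-1) ^ Fintype.card ι * ((fun z => p.eval z)^[m] 0 - y) := by
  have hnat : (p.comp^[m] X).natDegree = p.natDegree ^ m := by
    rw [natDegree_iterate_comp, natDegree_X, mul_one]
  have hmonic : (p.comp^[m] X - C y).Monic :=
    monic_sub_C (monic_iterate_comp hp monic_X hp0 (by simp) m) (hnat ▸ pow_ne_zero m hp0) y
  rw [prod_sq_eq_neg_one_pow_mul_eval_zero_of_roots_eq_pm hmonic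
    (by rw [natDegree_sub_C, hnat, hdeg]) hroots, eval_sub, eval_C, iterate_comp_eval, eval_X]

end SymmetricRoots

theorem prod_sq_of_roots_pm_general {R : Type*} [CommRing R] [IsDomain R] (c y : R) {m : ℕ}
    (hm : 1 ≤ m) (α : Fin (2 ^ (m - 1)) → R)
    (hroots : ((X ^ 2 + C c).comp^[m] X - C y).roots =
      Finset.univ.val.map α + Finset.univ.val.map fun i => -α i) :
    (∏ i, α i) ^ 2 =
      if 2 ≤ m then (fun z => z ^ 2 + c)^[m] 0 - y else y - ((fun z => z ^ 2 + c) 0) := by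
  have hdeg : (X ^ 2 + C c).natDegree ^ m = 2 * Fintype.card (Fin (2 ^ (m - 1))) := by
    rw [natDegree_X_pow_add_C, Fintype.card_fin, mul_pow_sub_one (by omega)]
  have hsq := prod_sq_of_roots_iterate_comp_sub_C_eq_pm (monic_X_pow_add_C c two_ne_zero)
    (by simp) y hdeg hroots
  simp only [eval_add, eval_pow, eval_X, eval_C, Fintype.card_fin] at hsq
  split_ifs with h
  · have heven : Even (2 ^ (m - 1)) := even_two.pow_of_ne_zero (by omega)
    rw [hsq, heven.neg_one_pow, one_mul]
  · obtain rfl : m = 1 := by omega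
    simpa using hsq

/-- Let `K` be a field of characteristic `≠ 2`, `c ∈ K`, `f(z) = z² + c`,
let `y` be an element of a fixed algebraic closure of `K`, and let `m ≥ 1`. Here
`F m` is the `m`-th iterate `f^m` of `f` as a polynomial over the algebraic closure.
Suppose `α_1, …, α_{2^{m−1}}` are elements of the algebraic closure such that the
multiset of roots of `f^m(z) − y`, counted with multiplicity, is exactly
`{α_1, −α_1, …, α_{2^{m−1}}, −α_{2^{m−1}}}`. Then `(α_1 ⋯ α_{2^{m−1}})² = f^m(0) − y`
if `m ≥ 2`, and `(α_1)² = y − f(0)` if `m = 1`. -/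
theorem prod_sq_of_roots_pm (K : Type*) [Field K] (hchar : ringChar K ≠ 2) (c : K)
    (y : AlgebraicClosure K) (m : ℕ) (hm : 1 ≤ m)
    (F : ℕ → Polynomial (AlgebraicClosure K))
    (hF0 : F 0 = X)
    (hFs : ∀ n : ℕ, F (n+1) =
      (X ^ 2 + C (algebraMap K (AlgebraicClosure K) c)).comp (F n))
    (α : Fin (2^(m-1)) → AlgebraicClosure K)
    (hroots : (F m - C y).roots =
      (Finset.univ.val.map α) + (Finset.univ.val.map (fun i => -(α i)))) :
    (∏ i, α i) ^ 2 =
      if 2 ≤ m then (fun z => z ^ 2 + algebraMap K (AlgebraicClosure K) c)^[m] 0 - y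
      else y - ((fun z => z ^ 2 + algebraMap K (AlgebraicClosure K) c) 0) := by
  exact prod_sq_of_roots_pm_general _ y hm α (eq_iterate_of_succ hF0 hFs m ▸ hroots)
end

section
/- Let x be an element of the algebraic closure of K not lying in the forward orbit {f^i(0) : i ≥ 0} of 0, and let y, −y be its two preimages under f. Set A_1 = {y} and B_1 = {−y}. For each n ≥ 2, let A_n be a subset of f^{−r}(A_{n−1}) containing exactly half of its elements and such that f^{−r}(A_{n−1}) = {±α : α ∈ A_n}, and similarly let B_n be a subset of f^{−r}(B_{n−1}) containing exactly half of its elements such that f^{−r}(B_{n−1}) = {±β : β ∈ B_n}. Then for every n ≥ 1, γ_n := (∏_{α ∈ A_n} α)/(∏_{β ∈ B_n} β) is a primitive 2^n-th root of unity. -/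
open scoped Classical

/-!
If no `s ∈ S` is a critical value of a monic polynomial `p`, then
`∏_{p(t) ∈ S} (X - t) = ∏_{s ∈ S} (p - s)`. When `p(0) = 0` and the preimage is the disjoint union
of `A` and `-A`, evaluating at `0` turns this into `∏_{a ∈ A} (-a²) = ∏_{s ∈ S} (-s)`. For
`p = f^r` this gives `γ_{n+1}² = γ_n`, the signs cancelling because `A_n` and `B_n` have the same
number of elements. As `γ_1 = y / (-y) = -1`, it follows that `γ_n ^ 2^(n-1) = -1`.
-/

lemma isPrimitiveRoot_two_pow_succ_of_pow_eq_neg_one {R : Type*} [CommRing R] [Nontrivial R]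
    (hR : ringChar R ≠ 2) {ζ : R} {n : ℕ} (hζ : ζ ^ 2 ^ n = -1) :
    IsPrimitiveRoot ζ (2 ^ (n + 1)) := by
  rw [IsPrimitiveRoot.iff_orderOf]
  apply orderOf_eq_prime_pow
  · rw [hζ]
    exact Ring.neg_one_ne_one_of_char_ne_two hR
  · rw [pow_succ, pow_mul, hζ, neg_one_sq]

lemma algebraMap_iterate_sq_add {R S : Type*} [CommSemiring R] [CommSemiring S] [Algebra R S]
    (c : R) (r : ℕ) (z : R) :
    algebraMap R S ((fun z => z ^ 2 + c)^[r] z) =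
      (fun z => z ^ 2 + algebraMap R S c)^[r] (algebraMap R S z) := by
  have h : Function.Semiconj (algebraMap R S) (fun z => z ^ 2 + c)
      (fun z => z ^ 2 + algebraMap R S c) := fun z => by simp
  exact h.iterate_right r z

section PolynomialPreimage

open Polynomial

variable {L : Type*} [Field L] {f p : L[X]} {S T : Finset L}

/-- The critical values of `f` in `L`: the values taken at the roots in `L` of its derivative. -/
def criticalValues (f : L[X]) : Set L :=
  (fun z => f.eval z) '' {w | f.derivative.IsRoot w}

/-- The postcritical set of `f` in `L`: the forward orbits of the critical values of `f`. A
critical point belongs to it only if it lies on such an orbit. -/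
def postcriticalSet (f : L[X]) : Set L :=
  {v | ∃ u ∈ criticalValues f, ∃ i : ℕ, (fun z => f.eval z)^[i] u = v}

lemma criticalValues_subset_postcriticalSet (f : L[X]) : criticalValues f ⊆ postcriticalSet f :=
  fun u hu => ⟨u, hu, 0, rfl⟩

lemma mapsTo_eval_postcriticalSet (f : L[X]) :
    Set.MapsTo (fun z => f.eval z) (postcriticalSet f) (postcriticalSet f) := by
  rintro _ ⟨u, hu, i, rfl⟩
  exact ⟨u, hu, i + 1, Function.iterate_succ_apply' _ _ _⟩

lemma criticalValues_X_sq_add_C (hchar : ringChar L ≠ 2) (c : L) :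
    criticalValues (X ^ 2 + C c) = {c} := by
  have critical_iff (w : L) : (X ^ 2 + C c).derivative.IsRoot w ↔ w = 0 := by
    simp [one_add_one_eq_two, Ring.two_ne_zero hchar]
  simp only [criticalValues, critical_iff, Set.ofPred_eq_eq_singleton, Set.image_singleton]
  simp

lemma mem_postcriticalSet_X_sq_add_C (hchar : ringChar L ≠ 2) {c v : L} :
    v ∈ postcriticalSet (X ^ 2 + C c) ↔ ∃ i : ℕ, (fun z => z ^ 2 + c)^[i + 1] 0 = v := by
  simp [postcriticalSet, criticalValues_X_sq_add_C hchar]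

lemma eval_comp_iterate_X (f : L[X]) (r : ℕ) (z : L) :
    (f.comp^[r] X).eval z = (fun z => f.eval z)^[r] z := by
  rw [iterate_comp_eval, eval_X]

lemma criticalValues_comp_iterate_X_subset (f : L[X]) (r : ℕ) :
    criticalValues (f.comp^[r] X) ⊆ postcriticalSet f := by
  induction r with
  | zero => simp [criticalValues]
  | succ r ih =>
    rintro _ ⟨w, hw, rfl⟩
    simp only [Function.iterate_succ_apply', Set.mem_ofPred_eq, derivative_comp, IsRoot.def,
      eval_mul, eval_comp, mul_eq_zero] at hw ⊢
    rcases hw with hinner | houter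
    · exact mapsTo_eval_postcriticalSet f (ih ⟨w, hinner, rfl⟩)
    · exact criticalValues_subset_postcriticalSet f ⟨_, houter, rfl⟩

lemma monic_comp_iterate_X (hf : f.Monic) (hdeg : f.natDegree ≠ 0) (r : ℕ) :
    (f.comp^[r] X).Monic := by
  induction r with
  | zero => exact monic_X
  | succ r ih =>
    rw [Function.iterate_succ_apply']
    exact hf.comp ih (by simp [natDegree_iterate_comp, hdeg])

lemma monic_sub_C_s1 (hp : p.Monic) (hdeg : p.natDegree ≠ 0) (s : L) : (p - C s).Monic :=
  hp.sub_of_left (degree_C_le.trans_lt (natDegree_pos_iff_degree_pos.mp hdeg.bot_lt))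

variable [IsAlgClosed L]

lemma separable_sub_C {s : L} (hs : s ∉ criticalValues p) :
    (p - C s).Separable := by
  rw [separable_def, isCoprime_iff_aeval_ne_zero_of_isAlgClosed L L]
  intro w
  rw [or_iff_not_imp_right, not_not]
  simpa [sub_eq_zero] using fun hw h => hs ⟨w, hw, h⟩

lemma prod_X_sub_C_preimage (hp : p.Monic) (hdeg : p.natDegree ≠ 0)
    (hS : Disjoint (S : Set L) (criticalValues p))
    (hT : (fun z => p.eval z) ⁻¹' S = (T : Set L)) :
    ∏ t ∈ T, (X - C t) = ∏ s ∈ S, (p - C s) := by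
  have mem_T (t : L) : t ∈ T ↔ p.eval t ∈ S := (Set.ext_iff.mp hT t).symm
  rw [← Finset.prod_fiberwise_of_maps_to fun t ht => (mem_T t).mp ht]
  refine Finset.prod_congr rfl fun s hs => ?_
  have hmonic : (p - C s).Monic := monic_sub_C_s1 hp hdeg s
  have hsep : (p - C s).Separable := separable_sub_C (Set.disjoint_left.mp hS hs)
  have fiber_eq : T.filter (fun t => p.eval t = s) = (p - C s).roots.toFinset := by
    ext t
    simp only [Finset.mem_filter, mem_T, Multiset.mem_toFinset, mem_roots hmonic.ne_zero,
      IsRoot.def, eval_sub, eval_C, sub_eq_zero]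
    exact and_iff_right_of_imp fun h => h ▸ hs
  rw [fiber_eq, Finset.prod_eq_multiset_prod, Multiset.toFinset_val, (nodup_roots hsep).dedup,
    ← (IsAlgClosed.splits (p - C s)).eq_prod_roots_of_monic hmonic]

lemma card_preimage (hp : p.Monic) (hdeg : p.natDegree ≠ 0)
    (hS : Disjoint (S : Set L) (criticalValues p))
    (hT : (fun z => p.eval z) ⁻¹' S = (T : Set L)) :
    T.card = S.card * p.natDegree := by
  have h := congrArg natDegree (prod_X_sub_C_preimage hp hdeg hS hT)
  rw [natDegree_prod_of_monic _ _ fun t _ => monic_X_sub_C t,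
    natDegree_prod_of_monic _ _ fun s _ => monic_sub_C_s1 hp hdeg s] at h
  simpa using h

lemma prod_neg_preimage (hp : p.Monic) (hdeg : p.natDegree ≠ 0) (hp0 : p.eval 0 = 0)
    (hS : Disjoint (S : Set L) (criticalValues p))
    (hT : (fun z => p.eval z) ⁻¹' S = (T : Set L)) :
    ∏ t ∈ T, -t = ∏ s ∈ S, -s := by
  have h := congrArg (eval 0) (prod_X_sub_C_preimage hp hdeg hS hT)
  simpa [eval_prod, hp0] using h

end PolynomialPreimage

section HalfPreimage

open Polynomial

/-- `A` is a half of the preimage of `S` under `g`, that is, one element is chosen out of each pair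
`{α, -α}` in this preimage. As in the main theorem, the choice is encoded by `g⁻¹(S) = A ∪ -A`
having twice as many elements as `A`. -/
structure IsHalfPreimage {M : Type*} [Neg M] (g : M → M) (S A : Finset M) : Prop where
  preimage_eq : g ⁻¹' S = ((A ∪ A.image (fun a => -a) : Finset M) : Set M)
  card_union : (A ∪ A.image (fun a => -a)).card = 2 * A.card

lemma IsHalfPreimage.disjoint {M : Type*} [Neg M] {g : M → M} {S A : Finset M} {P : Set M}
    (h : IsHalfPreimage g S A) (hP : Set.MapsTo g P P) (hS : Disjoint (S : Set M) P) :
    Disjoint (A : Set M) P := by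
  have hA : (A : Set M) ⊆ g ⁻¹' S := by
    rw [h.preimage_eq]
    exact Finset.coe_subset.mpr Finset.subset_union_left
  exact Set.disjoint_left.mpr fun a ha haP => Set.disjoint_left.mp hS (hA ha) (hP haP)

lemma disjoint_of_isHalfPreimage_succ {M : Type*} [Neg M] {g : M → M} {D : ℕ → Finset M}
    {P : Set M} (hP : Set.MapsTo g P P) {m : ℕ} (hm : Disjoint (D m : Set M) P)
    (hD : ∀ n, m ≤ n → IsHalfPreimage g (D n) (D (n + 1))) {n : ℕ} (hn : m ≤ n) :
    Disjoint (D n : Set M) P :=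
  Nat.le_induction hm (fun k hk ih => (hD k hk).disjoint hP ih) n hn

lemma IsHalfPreimage.disjoint_image_neg {M : Type*} [InvolutiveNeg M] {g : M → M} {S A : Finset M}
    (h : IsHalfPreimage g S A) : Disjoint A (A.image (fun a => -a)) := by
  rw [← Finset.card_union_eq_card_add_card, h.card_union,
    Finset.card_image_of_injective _ neg_injective, two_mul]

lemma IsHalfPreimage.prod_neg_union {R : Type*} [CommRing R] {g : R → R} {S A : Finset R}
    (h : IsHalfPreimage g S A) :
    ∏ t ∈ A ∪ A.image (fun a => -a), -t = (-1) ^ A.card * (∏ a ∈ A, a) ^ 2 := by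
  rw [Finset.prod_union h.disjoint_image_neg, Finset.prod_image neg_injective.injOn,
    Finset.prod_neg]
  simp only [neg_neg]
  ring

variable {L : Type*} [Field L] [IsAlgClosed L] {p : L[X]}

lemma IsHalfPreimage.two_mul_card {S A : Finset L}
    (h : IsHalfPreimage (fun z => p.eval z) S A) (hp : p.Monic)
    (hdeg : p.natDegree ≠ 0) (hS : Disjoint (S : Set L) (criticalValues p)) :
    2 * A.card = S.card * p.natDegree := by
  rw [← h.card_union, card_preimage hp hdeg hS h.preimage_eq]

lemma IsHalfPreimage.neg_one_pow_card_mul_prod_sq {S A : Finset L}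
    (h : IsHalfPreimage (fun z => p.eval z) S A) (hp : p.Monic)
    (hdeg : p.natDegree ≠ 0) (hp0 : p.eval 0 = 0)
    (hS : Disjoint (S : Set L) (criticalValues p)) :
    (-1) ^ A.card * (∏ a ∈ A, a) ^ 2 = (-1) ^ S.card * ∏ s ∈ S, s := by
  rw [← h.prod_neg_union, prod_neg_preimage hp hdeg hp0 hS h.preimage_eq, Finset.prod_neg]

lemma IsHalfPreimage.card_eq_card {S S' A B : Finset L}
    (hA : IsHalfPreimage (fun z => p.eval z) S A)
    (hB : IsHalfPreimage (fun z => p.eval z) S' B) (hp : p.Monic) (hdeg : p.natDegree ≠ 0)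
    (hS : Disjoint (S : Set L) (criticalValues p))
    (hS' : Disjoint (S' : Set L) (criticalValues p)) (hcard : S.card = S'.card) :
    A.card = B.card := by
  refine Nat.eq_of_mul_eq_mul_left two_pos ?_
  rw [hA.two_mul_card hp hdeg hS, hB.two_mul_card hp hdeg hS', hcard]

lemma IsHalfPreimage.prod_div_prod_sq {S S' A B : Finset L}
    (hA : IsHalfPreimage (fun z => p.eval z) S A)
    (hB : IsHalfPreimage (fun z => p.eval z) S' B) (hp : p.Monic) (hdeg : p.natDegree ≠ 0)
    (hp0 : p.eval 0 = 0) (hS : Disjoint (S : Set L) (criticalValues p))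
    (hS' : Disjoint (S' : Set L) (criticalValues p)) (hcard : S.card = S'.card) :
    ((∏ a ∈ A, a) / ∏ b ∈ B, b) ^ 2 = (∏ s ∈ S, s) / ∏ s ∈ S', s := by
  have sign_ne_zero (m : ℕ) : (-1 : L) ^ m ≠ 0 := pow_ne_zero m (neg_ne_zero.mpr one_ne_zero)
  calc ((∏ a ∈ A, a) / ∏ b ∈ B, b) ^ 2
      = ((-1) ^ A.card * (∏ a ∈ A, a) ^ 2) / ((-1) ^ B.card * (∏ b ∈ B, b) ^ 2) := by
        rw [hA.card_eq_card hB hp hdeg hS hS' hcard, mul_div_mul_left _ _ (sign_ne_zero _), div_pow]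
    _ = ((-1) ^ S.card * ∏ s ∈ S, s) / ((-1) ^ S'.card * ∏ s ∈ S', s) := by
        rw [hA.neg_one_pow_card_mul_prod_sq hp hdeg hp0 hS,
          hB.neg_one_pow_card_mul_prod_sq hp hdeg hp0 hS']
    _ = (∏ s ∈ S, s) / ∏ s ∈ S', s := by
        rw [hcard, mul_div_mul_left _ _ (sign_ne_zero _)]

theorem gamma_primitive_root_general (hchar : ringChar L ≠ 2) {f : L[X]} (hf : f.Monic)
    (hdeg : f.natDegree ≠ 0) {r : ℕ} (hper : (fun z => f.eval z)^[r] 0 = 0) {y : L} (hy0 : y ≠ 0)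
    (hy : y ∉ postcriticalSet f) (hny : -y ∉ postcriticalSet f) {A B : ℕ → Finset L}
    (hA1 : A 1 = {y}) (hB1 : B 1 = {-y})
    (hA : ∀ n, 1 ≤ n → IsHalfPreimage (fun z => f.eval z)^[r] (A n) (A (n + 1)))
    (hB : ∀ n, 1 ≤ n → IsHalfPreimage (fun z => f.eval z)^[r] (B n) (B (n + 1)))
    {n : ℕ} (hn : 1 ≤ n) :
    IsPrimitiveRoot ((∏ a ∈ A n, a) / ∏ b ∈ B n, b) (2 ^ n) := by
  let p : L[X] := f.comp^[r] X
  have hp : p.Monic := monic_comp_iterate_X hf hdeg r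
  have hpdeg : p.natDegree ≠ 0 := by simp [p, natDegree_iterate_comp, hdeg]
  have eval_p : (fun z => f.eval z)^[r] = fun z => p.eval z :=
    funext fun z => (eval_comp_iterate_X f r z).symm
  have hp0 : p.eval 0 = 0 := (eval_comp_iterate_X f r 0).trans hper
  have hinv := (mapsTo_eval_postcriticalSet f).iterate r
  rw [eval_p] at hA hB hinv
  have hcrit : criticalValues p ⊆ postcriticalSet f := criticalValues_comp_iterate_X_subset f r
  have hAcrit n (hn : 1 ≤ n) : Disjoint (A n : Set L) (criticalValues p) :=
    (disjoint_of_isHalfPreimage_succ hinv (by simpa [hA1] using hy) hA hn).mono_right hcrit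
  have hBcrit n (hn : 1 ≤ n) : Disjoint (B n : Set L) (criticalValues p) :=
    (disjoint_of_isHalfPreimage_succ hinv (by simpa [hB1] using hny) hB hn).mono_right hcrit
  have hcard n (hn : 1 ≤ n) : (A n).card = (B n).card := by
    induction n, hn using Nat.le_induction with
    | base => simp [hA1, hB1]
    | succ k hk ih =>
      exact (hA k hk).card_eq_card (hB k hk) hp hpdeg (hAcrit k hk) (hBcrit k hk) ih
  have hpow k : ((∏ a ∈ A (k + 1), a) / ∏ b ∈ B (k + 1), b) ^ 2 ^ k = -1 := by
    induction k with
    | zero => simp [hA1, hB1, hy0]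
    | succ k ih =>
      have hk : 1 ≤ k + 1 := Nat.le_add_left 1 k
      rw [pow_succ', pow_mul, (hA _ hk).prod_div_prod_sq (hB _ hk) hp hpdeg hp0 (hAcrit _ hk)
        (hBcrit _ hk) (hcard _ hk), ih]
  obtain ⟨k, rfl⟩ := Nat.exists_eq_add_of_le' hn
  exact isPrimitiveRoot_two_pow_succ_of_pow_eq_neg_one hchar (hpow k)

end HalfPreimage

/-- `K` a field of characteristic `≠ 2`, `f(z) = z² + c ∈ K[z]` with
`f^r(0) = 0` for a minimal integer `r ≥ 1`. Let `x` in the algebraic closure not lie in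
the forward orbit of `0`, and let `y, −y` be its two preimages under `f`. Set
`A 1 = {y}`, `B 1 = {−y}`, and for `n ≥ 2` let `A n` be a subset of `f^{−r}(A (n−1))`
containing exactly half of its elements with `f^{−r}(A (n−1)) = {±α : α ∈ A n}`, and
similarly for `B n`. Then for every `n ≥ 1`,
`γ_n := (∏_{α ∈ A n} α)/(∏_{β ∈ B n} β)` is a primitive `2^n`-th root of unity. -/
theorem gamma_primitive_root (K : Type*) [Field K] (hchar : ringChar K ≠ 2) (c : K)
    (r : ℕ) (hr : 1 ≤ r)
    (hper : (fun z : K => z ^ 2 + c)^[r] 0 = 0)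
    (hmin : ∀ j : ℕ, 1 ≤ j → j < r → (fun z : K => z ^ 2 + c)^[j] 0 ≠ 0)
    (x y : AlgebraicClosure K)
    (hx : ∀ i : ℕ, (fun z => z ^ 2 + algebraMap K (AlgebraicClosure K) c)^[i] 0 ≠ x)
    (hy : y ^ 2 + algebraMap K (AlgebraicClosure K) c = x)
    (A B : ℕ → Finset (AlgebraicClosure K))
    (hA1 : A 1 = {y}) (hB1 : B 1 = {-y})
    (hApre : ∀ n : ℕ, 2 ≤ n →
      {z : AlgebraicClosure K |
          (fun z => z ^ 2 + algebraMap K (AlgebraicClosure K) c)^[r] z ∈ (A (n-1) : Set (AlgebraicClosure K))}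
        = ((A n ∪ (A n).image (fun a => -a) : Finset (AlgebraicClosure K)) : Set (AlgebraicClosure K)))
    (hAhalf : ∀ n : ℕ, 2 ≤ n →
      (A n ∪ (A n).image (fun a => -a)).card = 2 * (A n).card)
    (hBpre : ∀ n : ℕ, 2 ≤ n →
      {z : AlgebraicClosure K |
          (fun z => z ^ 2 + algebraMap K (AlgebraicClosure K) c)^[r] z ∈ (B (n-1) : Set (AlgebraicClosure K))}
        = ((B n ∪ (B n).image (fun b => -b) : Finset (AlgebraicClosure K)) : Set (AlgebraicClosure K)))
    (hBhalf : ∀ n : ℕ, 2 ≤ n →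
      (B n ∪ (B n).image (fun b => -b)).card = 2 * (B n).card)
    (n : ℕ) (hn : 1 ≤ n) :
    IsPrimitiveRoot ((∏ a ∈ A n, a) / (∏ b ∈ B n, b)) (2 ^ n) := by
  have hcharL : ringChar (AlgebraicClosure K) ≠ 2 := by rwa [← Algebra.ringChar_eq K]
  let f : Polynomial (AlgebraicClosure K) := .X ^ 2 + .C (algebraMap K _ c)
  have eval_f : (fun z => f.eval z) = fun z => z ^ 2 + algebraMap K _ c := by simp [f]
  have hxf : x ∉ postcriticalSet f := by
    rw [mem_postcriticalSet_X_sq_add_C hcharL]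
    exact fun ⟨i, hi⟩ => hx (i + 1) hi
  have notMem {w} (hw : f.eval w = x) : w ∉ postcriticalSet f := fun h =>
    hxf (hw ▸ mapsTo_eval_postcriticalSet f h)
  have hperL : (fun z => f.eval z)^[r] 0 = 0 := by
    rw [eval_f, ← map_zero (algebraMap K _), ← algebraMap_iterate_sq_add, hper]
  have hy0 : y ≠ 0 := by
    rintro rfl
    exact hx 1 hy
  refine gamma_primitive_root_general hcharL (f := f) (Polynomial.monic_X_pow_add_C _ two_ne_zero)
    (by simp [f]) hperL hy0 (notMem (by simpa [f])) (notMem (by simpa [f])) hA1 hB1 ?_ ?_ hn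
  all_goals rw [eval_f]
  · exact fun n hn => ⟨hApre (n + 1) (by lia), hAhalf (n + 1) (by lia)⟩
  · exact fun n hn => ⟨hBpre (n + 1) (by lia), hBhalf (n + 1) (by lia)⟩
end

section
/- Let x_0 ∈ K not lie in the forward orbit {f^i(0) : i ≥ 0} of 0, and fix a sequence ζ_2 = −1, ζ_4, ζ_8, … where each ζ_{2^n} is a primitive 2^n-th root of unity in the algebraic closure and ζ_{2^n}² = ζ_{2^{n−1}}. Then there exists a labeling ℓ of the binary rooted tree of iterated preimages of x_0 — that is, a map ℓ from finite words over {a,b} to the algebraic closure with ℓ(empty word) = x_0, f(ℓ(wa)) = f(ℓ(wb)) = ℓ(w), and ℓ(wa) = −ℓ(wb) for every word w — such that for every word x and every integer i ≥ 1: (∏_{w ∈ W(r,i)} ℓ(xawa)) / (∏_{w ∈ W(r,i)} ℓ(xbwa)) = ζ_{2^{i+1}}. -/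
/-- `W(r,i)`: the words `s₁ ⋯ s_{ri−1}` of length `r*i − 1` over `{a,b}` (encoded with
`a = false`, `b = true`) with `s_j = a` whenever `r ∣ j`. -/
noncomputable def Wset (r i : ℕ) : Finset (List Bool) :=
  ((Finset.univ : Finset (Fin (r*i-1) → Bool)).filter
    (fun s => ∀ j : Fin (r*i-1), r ∣ (j:ℕ)+1 → s j = false)).image List.ofFn

/-!
Attach to each node `v` of the tree the sequence `q n = ∏ (-ℓ(v s₁ ⋯ sₙ₋₁ a))` over the words with
`s_j = a` whenever `r ∣ n - j`, and `q 0 = -ℓ(v)`. Comparing constant terms in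
`f^k(z) - y = ∏ (z - y')`, the product over the `k`-th preimages `y'` of `y`, determines `q n ^ 2`
up to an explicit sign: it is `f^n(0) - ℓ(v)` for `0 < n < r`, and `q (n - r)` for `n ≥ r` because
`f^r(0) = 0`.

Conversely, take *any* sequence `q` with these squares at a node. One can choose such sequences
`q_a`, `q_b` at its two children with `q (n + 1) = q_a n` if `r ∣ n`, `q (n + 1) = q_a n * q_b n`
otherwise, and `q_a (r * i) = ζ_{2^{i+1}} * q_b (r * i)`: away from the multiples of `r` the values
of `q_b` are free square roots and those of `q_a` are the resulting quotients, while on the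
multiples of `r` both are prescribed, consistently since `ζ_{2^{i+1}} ^ 2 = ζ_{2^i}`. Repeating
this from the root gives labels `ℓ(v) = -q_v 0` whose products are the `q_v` by construction.
-/

section WordProducts

variable {M : Type*} [CommMonoid M] {r : ℕ} {P : List Bool → ℕ → M}

theorem prod_words_eq_of_recursion
    (hP : ∀ v n, P v (n + 1) =
      if r ∣ n then P (v ++ [false]) n else P (v ++ [false]) n * P (v ++ [true]) n)
    (m : ℕ) (v : List Bool) :
    ∏ s : Fin m → Bool with ∀ j : Fin m, r ∣ m - j → s j = false,
      P (v ++ List.ofFn s ++ [false]) 0 = P v (m + 1) := by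
  induction m generalizing v with
  | zero => simp [hP]
  | succ m ih =>
    rw [hP v (m + 1), ← ih, ← ih]
    simp only [Finset.prod_filter]
    rw [← (Fin.consEquiv fun _ : Fin (m + 1) => Bool).prod_comp, Fintype.prod_prod_type]
    simp only [Fin.consEquiv_apply, Fin.forall_fin_succ, Fin.cons_zero, Fin.cons_succ,
      List.ofFn_succ, Fintype.prod_bool, Fin.val_zero, Fin.val_succ, Nat.sub_zero,
      Nat.add_sub_add_right]
    by_cases h : r ∣ m + 1 <;> simp [h, mul_comm]

theorem prod_Wset_eq_of_recursion
    (hP : ∀ v n, P v (n + 1) =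
      if r ∣ n then P (v ++ [false]) n else P (v ++ [false]) n * P (v ++ [true]) n)
    {i : ℕ} (hri : 0 < r * i) (v : List Bool) :
    ∏ w ∈ Wset r i, P (v ++ w ++ [false]) 0 = P v (r * i) := by
  have dvd_iff_dvd_reflect (j : Fin (r * i - 1)) : r ∣ (j : ℕ) + 1 ↔ r ∣ r * i - 1 - j := by
    have hsum : r ∣ (j + 1) + (r * i - 1 - j) := ⟨i, by lia⟩
    exact ⟨fun h => (Nat.dvd_add_right h).1 hsum, fun h => (Nat.dvd_add_left h).1 hsum⟩
  rw [Wset, Finset.prod_image List.ofFn_injective.injOn]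
  simp only [dvd_iff_dvd_reflect]
  rw [prod_words_eq_of_recursion hP, Nat.sub_add_cancel hri]

end WordProducts

section CriticalOrbit

variable {R S : Type*} [Semiring R] [Semiring S]

/-- The forward orbit `n ↦ f^n(0)` of the critical point `0` of `f(z) = z² + c`. -/
def critOrbit (c : R) (n : ℕ) : R := (fun z => z ^ 2 + c)^[n] 0

theorem critOrbit_zero (c : R) : critOrbit c 0 = 0 := rfl

theorem critOrbit_one (c : R) : critOrbit c 1 = c := by
  simp [critOrbit]

theorem critOrbit_succ (c : R) (n : ℕ) : critOrbit c (n + 1) = critOrbit c n ^ 2 + c :=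
  Function.iterate_succ_apply' ..

theorem map_critOrbit (φ : R →+* S) (c : R) (n : ℕ) :
    φ (critOrbit c n) = critOrbit (φ c) n := by
  induction n with
  | zero => simp only [critOrbit_zero, map_zero]
  | succ n ih => simp only [critOrbit_succ, map_add, map_pow, ih]

end CriticalOrbit

section BranchSign

variable (R : Type*) [Ring R] {r : ℕ}

/-- The sign `(-1) ^ N`, where `N` is the number of words `s₁ ⋯ sₙ₋₁` over `{a,b}` with `s_j = a`
whenever `r ∣ n - j`; it relates the square of a product of labels to the product over all
preimages. The value `-1` at `0` makes the recursion start correctly. -/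
def branchSign (r : ℕ) : ℕ → R
  | 0 => -1
  | n + 1 => if r ∣ n then branchSign r n else branchSign r n ^ 2

theorem branchSign_sq (n : ℕ) : branchSign R r n ^ 2 = 1 := by
  induction n with
  | zero => simp [branchSign]
  | succ n ih => rw [branchSign]; split_ifs <;> simp [ih]

theorem branchSign_ne_zero [Nontrivial R] (n : ℕ) : branchSign R r n ≠ 0 := fun h => by
  simpa [h] using branchSign_sq R (r := r) n

theorem branchSign_one : branchSign R r 1 = -1 := by
  simp [branchSign]

theorem branchSign_succ_of_dvd {n : ℕ} (h : r ∣ n) :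
    branchSign R r (n + 1) = branchSign R r n := by
  rw [branchSign, if_pos h]

theorem branchSign_succ_of_not_dvd {n : ℕ} (h : ¬r ∣ n) : branchSign R r (n + 1) = 1 := by
  rw [branchSign, if_neg h, branchSign_sq]

end BranchSign

theorem ne_zero_of_sq_chain {M : Type*} [MonoidWithZero M] {ζ : ℕ → M} (h0 : ζ 0 ≠ 0)
    (hζ : ∀ i, ζ (i + 1) ^ 2 = ζ i) (i : ℕ) : ζ i ≠ 0 := by
  induction i with
  | zero => exact h0
  | succ i ih => exact fun h => ih (by rw [← hζ, h, zero_pow two_ne_zero])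

section Field

variable {L : Type*} [Field L]

theorem exists_mul_sq_chain (hsq : ∀ x : L, IsSquare x) {u : ℕ → L} (hu : ∀ i, u i ≠ 0) (y : L) :
    ∃ t : ℕ → L, t 0 = y ∧ ∀ i, u i * t (i + 1) ^ 2 = t i := by
  choose root eq_root_mul_root using hsq
  refine ⟨Nat.rec y fun i x => root (x / u i), rfl, fun i => ?_⟩
  rw [sq, ← eq_root_mul_root, mul_div_cancel₀ _ (hu i)]

/-- A sequence with the squares that `n ↦ ∏ (-ℓ(v s₁ ⋯ sₙ₋₁ a))`, the product over the words with
`s_j = a` whenever `r ∣ n - j`, has at a node `v` of a labeled preimage tree of `z² + c`. The value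
at `0` stands for `-ℓ(v)`, and `ℓ(v)` must avoid the orbit of `0`. -/
structure ProductProfile (c : L) (r : ℕ) where
  toFun : ℕ → L
  sign_mul_sq_of_lt : ∀ k, 0 < k → k < r →
    branchSign L r k * toFun k ^ 2 = critOrbit c k + toFun 0
  sign_mul_sq_add : ∀ n, branchSign L r (n + r) * toFun (n + r) ^ 2 = toFun n
  critOrbit_add_ne_zero : ∀ n, critOrbit c n + toFun 0 ≠ 0

namespace ProductProfile

variable {c : L} {r : ℕ}

instance : CoeFun (ProductProfile c r) fun _ => ℕ → L := ⟨toFun⟩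

section Basic

variable (p : ProductProfile c r)

theorem sign_mul_sq_of_le (hper : critOrbit c r = 0) {k : ℕ} (hk : 0 < k) (hkr : k ≤ r) :
    branchSign L r k * p k ^ 2 = critOrbit c k + p 0 := by
  rcases hkr.lt_or_eq with hlt | rfl
  · exact p.sign_mul_sq_of_lt k hk hlt
  · simpa [hper] using p.sign_mul_sq_add 0

theorem ne_zero (hr : 0 < r) (n : ℕ) : p n ≠ 0 := by
  induction n using Nat.strong_induction_on with
  | _ n ih =>
    intro hn
    rcases n.eq_zero_or_pos with rfl | hpos
    · exact p.critOrbit_add_ne_zero 0 (by rw [hn, critOrbit_zero, add_zero])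
    rcases lt_or_ge n r with hlt | hge
    · exact p.critOrbit_add_ne_zero n (by simp [← p.sign_mul_sq_of_lt n hpos hlt, hn])
    · obtain ⟨m, rfl⟩ := Nat.exists_eq_add_of_le' hge
      exact ih m (by lia) (by simp [← p.sign_mul_sq_add m, hn])

theorem sq_one_add (hr : 0 < r) (hper : critOrbit c r = 0) : p 1 ^ 2 + c = -p 0 := by
  have h := p.sign_mul_sq_of_le hper one_pos hr
  rw [branchSign_one, critOrbit_one] at h
  linear_combination -h

theorem critOrbit_succ_add (hr : 0 < r) (hper : critOrbit c r = 0) (n : ℕ) :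
    critOrbit c (n + 1) + p 0 = (critOrbit c n + p 1) * (critOrbit c n - p 1) := by
  rw [critOrbit_succ]
  linear_combination p.sq_one_add hr hper

theorem sign_mul_sq_add_succ_of_dvd {n : ℕ} (h : r ∣ n) :
    branchSign L r (n + r) * p (n + r + 1) ^ 2 = p (n + 1) := by
  rw [← branchSign_succ_of_dvd L (h.add dvd_rfl), add_right_comm, p.sign_mul_sq_add]

theorem sq_add_succ_of_not_dvd {n : ℕ} (h : ¬r ∣ n) : p (n + r + 1) ^ 2 = p (n + 1) := by
  rw [← p.sign_mul_sq_add (n + 1), add_right_comm n 1 r,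
    branchSign_succ_of_not_dvd L (by simpa using h), one_mul]

theorem sq_succ_of_pos_of_lt (hper : critOrbit c r = 0) {k : ℕ} (hk : 0 < k) (hkr : k < r) :
    p (k + 1) ^ 2 = (critOrbit c k + p 1) * (critOrbit c k - p 1) := by
  have h := p.sign_mul_sq_of_le hper k.succ_pos hkr
  rwa [branchSign_succ_of_not_dvd L (Nat.not_dvd_of_pos_of_lt hk hkr), one_mul,
    p.critOrbit_succ_add (hk.trans hkr) hper] at h

end Basic

theorem exists_eq_on_multiples (hsq : ∀ x : L, IsSquare x) (hr : 0 < r) (m : ℕ → L)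
    (hm : ∀ i, branchSign L r (r * (i + 1)) * m (i + 1) ^ 2 = m i)
    (horb : ∀ n, critOrbit c n + m 0 ≠ 0) :
    ∃ q : ProductProfile c r, ∀ i, q (r * i) = m i := by
  have exists_first (k : ℕ) : ∃ x, branchSign L r k * x ^ 2 = critOrbit c k + m 0 := by
    obtain ⟨x, hx⟩ := hsq ((critOrbit c k + m 0) / branchSign L r k)
    exact ⟨x, by rw [sq, ← hx, mul_div_cancel₀ _ (branchSign_ne_zero L k)]⟩
  choose first hfirst using exists_first
  choose t ht0 ht using fun k => exists_mul_sq_chain hsq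
    (fun i => branchSign_ne_zero L (r := r) (k + r * i + r)) (first k)
  refine ⟨⟨fun n => if r ∣ n then m (n / r) else t (n % r) (n / r), ?_, ?_, ?_⟩, fun i => ?_⟩
  · intro k hk hkr
    simp [Nat.not_dvd_of_pos_of_lt hk hkr, Nat.mod_eq_of_lt hkr, Nat.div_eq_of_lt hkr, ht0,
      hfirst]
  · intro n
    by_cases h : r ∣ n
    · obtain ⟨i, rfl⟩ := h
      simpa [hr, Nat.add_div_right, mul_add] using hm i
    · simpa [h, hr, Nat.add_div_right, Nat.mod_add_div] using ht (n % r) (n / r)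
  · simpa using horb
  · simp [hr]

theorem exists_apply_zero_eq (hsq : ∀ x : L, IsSquare x) (hr : 0 < r) {y : L}
    (hy : ∀ n, critOrbit c n + y ≠ 0) : ∃ q : ProductProfile c r, q 0 = y := by
  obtain ⟨m, rfl, hm⟩ := exists_mul_sq_chain hsq
    (fun i => branchSign_ne_zero L (r := r) (r * (i + 1))) y
  obtain ⟨q, hq⟩ := exists_eq_on_multiples hsq hr m hm hy
  exact ⟨q, hq 0⟩

/-- The profile at the child `a` of a node with profile `p` that is forced by the profile `q` at
the child `b`. -/
def sibling (hr : 0 < r) (hper : critOrbit c r = 0) (p q : ProductProfile c r)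
    (hq : q 0 = -p 1) : ProductProfile c r where
  toFun n := if r ∣ n then p (n + 1) else p (n + 1) / q n
  sign_mul_sq_of_lt k hk hkr := by
    have hqk := q.sign_mul_sq_of_le hper hk hkr.le
    rw [hq] at hqk
    have hqk0 := q.ne_zero hr k
    simp only [Nat.not_dvd_of_pos_of_lt hk hkr, if_false, dvd_zero, if_true, zero_add, div_pow,
      p.sq_succ_of_pos_of_lt hper hk hkr]
    field_simp
    linear_combination (-(critOrbit c k + p 1) * branchSign L r k) * hqk +
      (critOrbit c k + p 1) * q k ^ 2 * branchSign_sq L (r := r) k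
  sign_mul_sq_add n := by
    by_cases h : r ∣ n
    · simpa [h] using p.sign_mul_sq_add_succ_of_dvd h
    · have hqn := q.ne_zero hr n
      have hqnr := q.ne_zero hr (n + r)
      simp only [Nat.dvd_add_self_right, h, if_false, div_pow, p.sq_add_succ_of_not_dvd h]
      field_simp
      linear_combination (-p (n + 1) * branchSign L r (n + r)) * q.sign_mul_sq_add n +
        p (n + 1) * q (n + r) ^ 2 * branchSign_sq L (r := r) (n + r)
  critOrbit_add_ne_zero n := by
    have h := p.critOrbit_add_ne_zero (n + 1)
    rw [p.critOrbit_succ_add hr hper] at h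
    simpa using left_ne_zero_of_mul h

section Children

variable (hsq : ∀ x : L, IsSquare x) (hr : 0 < r) (hper : critOrbit c r = 0)
  {ζ : ℕ → L} (hζ0 : ζ 0 = -1) (hζ : ∀ i, ζ (i + 1) ^ 2 = ζ i) (p : ProductProfile c r)

include hsq hr hper hζ0 hζ

theorem exists_mul_eq_succ :
    ∃ q : ProductProfile c r, ∀ i, ζ i * q (r * i) = p (r * i + 1) := by
  have hζne := ne_zero_of_sq_chain (hζ0 ▸ neg_ne_zero.2 one_ne_zero) hζ
  obtain ⟨q, hq⟩ := exists_eq_on_multiples (c := c) hsq hr (fun i => p (r * i + 1) / ζ i)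
    (fun i => by
      rw [div_pow, hζ, mul_add_one, ← mul_div_assoc,
        p.sign_mul_sq_add_succ_of_dvd (Nat.dvd_mul_right r i)])
    (fun n => by
      have h := p.critOrbit_add_ne_zero (n + 1)
      rw [p.critOrbit_succ_add hr hper] at h
      simpa [hζ0, div_neg, sub_eq_add_neg] using right_ne_zero_of_mul h)
  exact ⟨q, fun i => by rw [hq, mul_div_cancel₀ _ (hζne i)]⟩

theorem exists_children :
    ∃ a b : ProductProfile c r, a 0 = -b 0 ∧ a 0 ^ 2 + c = -p 0 ∧
      (∀ n, p (n + 1) = if r ∣ n then a n else a n * b n) ∧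
      ∀ i, a (r * i) = ζ i * b (r * i) := by
  obtain ⟨b, hb⟩ := exists_mul_eq_succ hsq hr hper hζ0 hζ p
  have hb0 : b 0 = -p 1 := by simpa [hζ0, neg_eq_iff_eq_neg] using hb 0
  let a := sibling hr hper p b hb0
  have ha (n : ℕ) : a n = if r ∣ n then p (n + 1) else p (n + 1) / b n := rfl
  refine ⟨a, b, ?_, ?_, fun n => ?_, fun i => ?_⟩
  · simp [ha, hb0]
  · simpa [ha] using p.sq_one_add hr hper
  · by_cases h : r ∣ n <;> simp [ha, h, b.ne_zero hr n]
  · simp [ha, hb]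

end Children

end ProductProfile

/-- Here `ζ i` plays the role of the primitive `2^(i+1)`-th root of unity. -/
theorem exists_labeling_general (hsq : ∀ x : L, IsSquare x) {c : L} {r : ℕ} (hr : 0 < r)
    (hper : critOrbit c r = 0) {x₀ : L}
    (hx₀ : ∀ i : ℕ, critOrbit c i ≠ x₀)
    {ζ : ℕ → L} (hζ0 : ζ 0 = -1) (hζ : ∀ i, ζ (i + 1) ^ 2 = ζ i) :
    ∃ ℓ : List Bool → L,
      ℓ [] = x₀ ∧
      (∀ (w : List Bool) (s : Bool), ℓ (w ++ [s]) ^ 2 + c = ℓ w) ∧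
      (∀ w : List Bool, ℓ (w ++ [false]) = -ℓ (w ++ [true])) ∧
      (∀ (x : List Bool) (i : ℕ), 1 ≤ i →
        (∏ w ∈ Wset r i, ℓ (x ++ [false] ++ w ++ [false])) /
          (∏ w ∈ Wset r i, ℓ (x ++ [true] ++ w ++ [false])) = ζ i) := by
  obtain ⟨root, hroot⟩ := ProductProfile.exists_apply_zero_eq (c := c) (y := -x₀) hsq hr
    fun n => by rw [← sub_eq_add_neg]; exact sub_ne_zero.2 (hx₀ n)
  choose a b hab hsq_a hrec hratio using ProductProfile.exists_children hsq hr hper hζ0 hζ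
  let q (w : List Bool) : ProductProfile c r :=
    w.foldl (fun p s => bif s then b p else a p) root
  have hqa (w : List Bool) : q (w ++ [false]) = a (q w) := by simp [q]
  have hqb (w : List Bool) : q (w ++ [true]) = b (q w) := by simp [q]
  have hprod {i : ℕ} (hi : 1 ≤ i) (v : List Bool) :
      ∏ w ∈ Wset r i, q (v ++ w ++ [false]) 0 = q v (r * i) :=
    prod_Wset_eq_of_recursion (P := fun v n => q v n)
      (fun v n => by simp only [hqa, hqb, hrec (q v) n]) (Nat.mul_pos hr hi) v
  refine ⟨fun w => -q w 0, by simp [q, hroot], fun w s => ?_, fun w => ?_, fun x i hi => ?_⟩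
  · cases s
    · simp only [hqa, neg_sq, hsq_a]
    · simp only [hqb, ← hab, hsq_a]
  · simp only [hqa, hqb, hab]
  · simp only [← Finset.prod_div_distrib, neg_div_neg_eq]
    rw [Finset.prod_div_distrib, hprod hi, hprod hi, hqa, hqb, hratio,
      mul_div_cancel_right₀ _ ((b (q x)).ne_zero hr _)]

end Field

/-- `K` a field of characteristic `≠ 2`, `f(z) = z² + c ∈ K[z]` with
`f^r(0) = 0` for a minimal `r ≥ 1`. Let `x₀ ∈ K` not lie in the forward orbit of `0`,
and fix a sequence `ζ 1 = −1, ζ 2, ζ 3, …` where `ζ n` is a primitive `2^n`-th root of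
unity and `(ζ n)² = ζ (n−1)`. Then there is a labeling `ℓ` of the binary rooted tree of
iterated preimages of `x₀` — a map from finite words over `{a,b}` (with `a = false`,
`b = true`) to the algebraic closure with `ℓ(∅) = x₀`, `f(ℓ(wa)) = f(ℓ(wb)) = ℓ(w)`,
and `ℓ(wa) = −ℓ(wb)` — such that for every word `x` and every `i ≥ 1`:
`(∏_{w ∈ W(r,i)} ℓ(xawa)) / (∏_{w ∈ W(r,i)} ℓ(xbwa)) = ζ (i+1)`. -/
theorem exists_labeling (K : Type*) [Field K] (hchar : ringChar K ≠ 2) (c : K)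
    (r : ℕ) (hr : 1 ≤ r)
    (hper : (fun z : K => z ^ 2 + c)^[r] 0 = 0)
    (hmin : ∀ j : ℕ, 1 ≤ j → j < r → (fun z : K => z ^ 2 + c)^[j] 0 ≠ 0)
    (x₀ : K)
    (hx₀ : ∀ i : ℕ, (fun z : K => z ^ 2 + c)^[i] 0 ≠ x₀)
    (ζ : ℕ → AlgebraicClosure K)
    (hζ1 : ζ 1 = -1)
    (hζprim : ∀ n : ℕ, 1 ≤ n → IsPrimitiveRoot (ζ n) (2 ^ n))
    (hζsq : ∀ n : ℕ, 2 ≤ n → (ζ n) ^ 2 = ζ (n-1)) :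
    ∃ ℓ : List Bool → AlgebraicClosure K,
      ℓ [] = algebraMap K (AlgebraicClosure K) x₀ ∧
      (∀ (w : List Bool) (s : Bool),
        (ℓ (w ++ [s])) ^ 2 + algebraMap K (AlgebraicClosure K) c = ℓ w) ∧
      (∀ w : List Bool, ℓ (w ++ [false]) = - ℓ (w ++ [true])) ∧
      (∀ (x : List Bool) (i : ℕ), 1 ≤ i →
        (∏ w ∈ Wset r i, ℓ (x ++ [false] ++ w ++ [false])) /
          (∏ w ∈ Wset r i, ℓ (x ++ [true] ++ w ++ [false])) = ζ (i+1)) :=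
  exists_labeling_general IsAlgClosed.exists_eq_mul_self hr
    (by rw [← map_critOrbit, critOrbit, hper, map_zero])
    (fun i h => hx₀ i ((algebraMap K _).injective ((map_critOrbit _ c i).trans h)))
    (ζ := fun i => ζ (i + 1)) hζ1 (fun i => hζsq (i + 2) (by lia))
end

section
/- For every integer r ≥ 1, M_{r,∞} is a subgroup of Aut(T_∞): it contains the identity automorphism and is closed under composition and inversion. -/
/-- Nodes of the infinite binary rooted tree `T_∞` are finite words over `{a,b}`,
encoded as `List Bool` with `a = false` and `b = true`; children of `w` are
`w ++ [false]` and `w ++ [true]`. An automorphism of `T_∞`. -/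
def IsTreeAut (σ : List Bool → List Bool) : Prop :=
  Function.Bijective σ ∧ (∀ w, (σ w).length = w.length) ∧
    ∀ w s, ∃ t, σ (w ++ [s]) = σ w ++ [t]

/-- The parity `Par(σ,x) ∈ {0,1}`: `0` if `σ(xa) = σ(x)a`, and `1` otherwise. -/
def par (σ : List Bool → List Bool) (x : List Bool) : ℕ :=
  if σ (x ++ [false]) = σ x ++ [false] then 0 else 1

/-- `Q_r(σ,x) := Σ_{i≥1} 2^i Σ_{w ∈ W(r,i)} Par(σ, xw)` in `ℤ₂`. -/
noncomputable def Qr (r : ℕ) (σ : List Bool → List Bool) (x : List Bool) : ℤ_[2] :=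
  ∑' i : ℕ, (2:ℤ_[2])^(i+1) * ∑ w ∈ Wset r (i+1), (par σ (x ++ w) : ℤ_[2])

/-- `P_r(σ,x) := (−1)^{Par(σ,x)} + Q_r(σ,xb) − Q_r(σ,xa)` in `ℤ₂`. -/
noncomputable def Pr (r : ℕ) (σ : List Bool → List Bool) (x : List Bool) : ℤ_[2] :=
  (-1:ℤ_[2])^(par σ x) + Qr r σ (x ++ [true]) - Qr r σ (x ++ [false])

/-- `M_{r,∞}`: tree automorphisms for which `P_r(σ,·)` is constant. -/
def Mset (r : ℕ) : Set (List Bool → List Bool) :=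
  {σ | IsTreeAut σ ∧ ∀ x₁ x₂ : List Bool, Pr r σ x₁ = Pr r σ x₂}

/-- `B_{r,∞}`: elements of `M_{r,∞}` with common value `P_r(σ) = 1`. -/
def Bset (r : ℕ) : Set (List Bool → List Bool) :=
  {σ | σ ∈ Mset r ∧ Pr r σ [] = 1}

/-!
Splitting a word of `W(r,i+1)` at its first forced letter gives the recursion
`Q_r(σ,x) = 2 ∑_{|u| = r-1} (Par(σ,xu) + Q_r(σ,xua))`, which determines `Q_r(σ,·)`: by Nakayama's
lemma over `ℤ₂`, the difference of two solutions vanishes. If `P_r(σ,·)` is constant, equal to `P`,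
then `x ↦ P * Q_r(τ,x) + Q_r(σ,τ(x))` solves the recursion of `σ ∘ τ`, because `τ` carries the
words `xu` with `|u| = r-1` bijectively onto the words `τ(x)u`. Hence `P_r(σ ∘ τ,x) = P * P_r(τ,x)`,
which gives closure under composition and, as `P_r(id,x) = 1`, under inversion.
-/

section Automorphisms

theorem isTreeAut_id : IsTreeAut id :=
  ⟨Function.bijective_id, fun _ ↦ rfl, fun _ s ↦ ⟨s, rfl⟩⟩

variable {σ τ : List Bool → List Bool}

theorem IsTreeAut.comp (hσ : IsTreeAut σ) (hτ : IsTreeAut τ) : IsTreeAut (σ ∘ τ) := by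
  refine ⟨hσ.1.comp hτ.1, fun w ↦ (hσ.2.1 _).trans (hτ.2.1 w), fun w s ↦ ?_⟩
  obtain ⟨t, ht⟩ := hτ.2.2 w s
  obtain ⟨u, hu⟩ := hσ.2.2 (τ w) t
  exact ⟨u, by rw [Function.comp_apply, ht, hu, Function.comp_apply]⟩

theorem IsTreeAut.par_cases (hσ : IsTreeAut σ) (x : List Bool) :
    (par σ x = 0 ∧ ∀ s, σ (x ++ [s]) = σ x ++ [s]) ∨
      (par σ x = 1 ∧ ∀ s, σ (x ++ [s]) = σ x ++ [!s]) := by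
  obtain ⟨t, ht⟩ := hσ.2.2 x false
  obtain ⟨t', ht'⟩ := hσ.2.2 x true
  have hne : t ≠ t' := by
    rintro rfl
    simpa using hσ.1.injective (ht.trans ht'.symm)
  cases t <;> cases t' <;> simp_all [par]

theorem IsTreeAut.of_rightInverse (hσ : IsTreeAut σ) (h : Function.RightInverse τ σ) :
    IsTreeAut τ := by
  refine ⟨(hσ.1.of_comp_iff' τ).mp (h.id ▸ Function.bijective_id),
    fun w ↦ by rw [← hσ.2.1, h], fun w s ↦ ?_⟩
  suffices ∃ t, σ (τ w ++ [t]) = w ++ [s] by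
    obtain ⟨t, ht⟩ := this
    exact ⟨t, hσ.1.injective ((h _).trans ht.symm)⟩
  rcases hσ.par_cases (τ w) with ⟨-, hc⟩ | ⟨-, hc⟩
  · exact ⟨s, by rw [hc, h]⟩
  · exact ⟨!s, by rw [hc, h, Bool.not_not]⟩

theorem IsTreeAut.isPrefix_apply_append (hσ : IsTreeAut σ) (x u : List Bool) :
    σ x <+: σ (x ++ u) := by
  induction u using List.reverseRecOn with
  | nil => simp
  | append_singleton u s ih =>
    obtain ⟨t, ht⟩ := hσ.2.2 (x ++ u) s
    rw [← List.append_assoc, ht]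
    exact ih.trans (List.prefix_append _ _)

theorem IsTreeAut.exists_section (hσ : IsTreeAut σ) (x : List Bool) :
    ∃ ρ, IsTreeAut ρ ∧ ∀ u, σ (x ++ u) = σ x ++ ρ u := by
  choose ρ hρ using hσ.isPrefix_apply_append x
  have hinj : Function.Injective ρ := fun u v huv ↦
    List.append_cancel_left (hσ.1.injective (by rw [← hρ, ← hρ, huv]))
  have hsurj : Function.Surjective ρ := fun v ↦ by
    obtain ⟨y, hy⟩ := hσ.1.surjective (σ x ++ v)
    have hlen : x.length ≤ y.length := by
      rw [← hσ.2.1 y, hy, List.length_append, hσ.2.1]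
      exact Nat.le_add_right _ _
    obtain ⟨x', u, rfl, hx'⟩ : ∃ x' u, y = x' ++ u ∧ x'.length = x.length :=
      ⟨y.take x.length, y.drop x.length, (List.take_append_drop _ _).symm,
        List.length_take_of_le hlen⟩
    obtain ⟨t, ht⟩ := hσ.isPrefix_apply_append x' u
    have hσx : σ x' = σ x :=
      List.append_inj_left (ht.trans hy) (by rw [hσ.2.1, hσ.2.1, hx'])
    obtain rfl := hσ.1.injective hσx
    exact ⟨u, List.append_cancel_left ((hρ u).trans hy)⟩
  refine ⟨ρ, ⟨⟨hinj, hsurj⟩, fun u ↦ ?_, fun u s ↦ ?_⟩, fun u ↦ (hρ u).symm⟩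
  · have h := congrArg List.length (hρ u)
    rw [List.length_append, hσ.2.1, hσ.2.1, List.length_append] at h
    exact Nat.add_left_cancel h
  · obtain ⟨t, ht⟩ := hσ.2.2 (x ++ u) s
    refine ⟨t, List.append_cancel_left (as := σ x) ?_⟩
    rw [hρ, ← List.append_assoc, ht, ← hρ u, List.append_assoc]

variable {R : Type*} [Ring R]

theorem IsTreeAut.par_comp (hσ : IsTreeAut σ) (hτ : IsTreeAut τ) (x : List Bool) :
    (par (σ ∘ τ) x : R) = par σ (τ x) + (-1) ^ par σ (τ x) * par τ x := by
  rcases hτ.par_cases x with ⟨hp, hc⟩ | ⟨hp, hc⟩ <;>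
    rcases hσ.par_cases (τ x) with ⟨hq, hd⟩ | ⟨hq, hd⟩ <;>
      simp [hp, hq, par.eq_1 (σ ∘ τ), hc, hd]

theorem IsTreeAut.neg_one_pow_par_comp (hσ : IsTreeAut σ) (hτ : IsTreeAut τ) (x : List Bool) :
    (-1 : R) ^ par (σ ∘ τ) x = (-1) ^ par σ (τ x) * (-1) ^ par τ x := by
  rcases hτ.par_cases x with ⟨hp, hc⟩ | ⟨hp, hc⟩ <;>
    rcases hσ.par_cases (τ x) with ⟨hq, hd⟩ | ⟨hq, hd⟩ <;>
      simp [hp, hq, par.eq_1 (σ ∘ τ), hc, hd]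

theorem IsTreeAut.apply_map_append_false (hσ : IsTreeAut σ) (f : List Bool → R) (x : List Bool) :
    f (σ (x ++ [false])) =
      f (σ x ++ [false]) + par σ x * (f (σ x ++ [true]) - f (σ x ++ [false])) := by
  rcases hσ.par_cases x with ⟨hp, hc⟩ | ⟨hp, hc⟩ <;> simp [hp, hc]

theorem IsTreeAut.apply_map_append_true_sub (hσ : IsTreeAut σ) (f : List Bool → R)
    (x : List Bool) :
    f (σ (x ++ [true])) - f (σ (x ++ [false])) =
      (-1) ^ par σ x * (f (σ x ++ [true]) - f (σ x ++ [false])) := by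
  rcases hσ.par_cases x with ⟨hp, hc⟩ | ⟨hp, hc⟩ <;> simp [hp, hc]

end Automorphisms

section Words

variable {r i : ℕ} {w u v : List Bool}

/-- The default letter `false` makes the condition vacuous beyond the end of `w`. -/
theorem mem_Wset :
    w ∈ Wset r i ↔ w.length = r * i - 1 ∧ ∀ j, r ∣ j + 1 → w.getD j false = false := by
  simp only [Wset, Finset.mem_image, Finset.mem_filter, Finset.mem_univ, true_and]
  constructor
  · rintro ⟨s, hs, rfl⟩
    refine ⟨List.length_ofFn, fun j hj ↦ ?_⟩
    by_cases hlt : j < r * i - 1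
    · simpa [hlt] using hs ⟨j, hlt⟩ hj
    · simp [hlt]
  · rintro ⟨hlen, hw⟩
    refine ⟨fun j ↦ w.getD j false, fun j ↦ hw j, List.ext_getElem (by simp [hlen]) ?_⟩
    intro j _ hj
    simp [hj]

theorem mem_Wset_one : w ∈ Wset r 1 ↔ w.length = r - 1 := by
  rw [mem_Wset, mul_one, and_iff_left_iff_imp]
  refine fun hlen j hj ↦ List.getD_eq_default _ _ ?_
  have := Nat.le_of_dvd j.succ_pos hj
  omega

theorem append_cons_mem_Wset_succ (hr : 1 ≤ r) (hi : 1 ≤ i) (hu : u.length = r - 1) :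
    u ++ false :: v ∈ Wset r (i + 1) ↔ v ∈ Wset r i := by
  have hri : 1 ≤ r * i := Nat.mul_pos hr hi
  rw [mem_Wset, mem_Wset]
  have getD_add (k : ℕ) : (u ++ false :: v).getD (k + r) false = v.getD k false := by
    rw [List.getD_append_right _ _ _ _ (by omega), hu, show k + r - (r - 1) = k + 1 by omega,
      List.getD_cons_succ]
  refine and_congr (by rw [List.length_append, List.length_cons, mul_add_one]; omega)
    ⟨fun h j hj ↦ ?_, fun h j hj ↦ ?_⟩
  · rw [← getD_add]
    exact h (j + r) (by rwa [add_right_comm, Nat.dvd_add_self_right])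
  · have hle := Nat.le_of_dvd j.succ_pos hj
    obtain rfl | ⟨k, rfl⟩ : j = r - 1 ∨ ∃ k, j = k + r :=
      (Nat.eq_or_lt_of_le (show r - 1 ≤ j by omega)).imp Eq.symm fun _ ↦ ⟨j - r, by omega⟩
    · rw [← hu, List.getD_append_right _ _ _ _ le_rfl, Nat.sub_self, List.getD_cons_zero]
    · rw [getD_add]
      exact h k (by rwa [add_right_comm, Nat.dvd_add_self_right] at hj)

theorem exists_eq_append_cons_of_mem_Wset_succ (hr : 1 ≤ r) (hi : 1 ≤ i)
    (hw : w ∈ Wset r (i + 1)) : ∃ u v, u.length = r - 1 ∧ w = u ++ false :: v := by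
  obtain ⟨hlen, hletter⟩ := mem_Wset.mp hw
  have hri : 1 ≤ r * i := Nat.mul_pos hr hi
  have hlt : r - 1 < w.length := by rw [hlen, mul_add_one]; omega
  have hget : w[r - 1] = false := by
    rw [← List.getD_eq_getElem w false hlt]
    exact hletter _ (by rw [Nat.sub_add_cancel hr])
  refine ⟨w.take (r - 1), w.drop (r - 1 + 1), List.length_take_of_le hlt.le, ?_⟩
  rw [← hget, ← List.drop_eq_getElem_cons hlt, List.take_append_drop]

theorem sum_Wset_succ {M : Type*} [AddCommMonoid M] (hr : 1 ≤ r) (hi : 1 ≤ i)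
    (f : List Bool → M) :
    ∑ w ∈ Wset r (i + 1), f w = ∑ u ∈ Wset r 1, ∑ v ∈ Wset r i, f (u ++ false :: v) := by
  rw [← Finset.sum_product']
  symm
  refine Finset.sum_nbij (fun p ↦ p.1 ++ false :: p.2) ?_ ?_ ?_ fun _ _ ↦ rfl
  · rintro ⟨u, v⟩ huv
    rw [Finset.mem_product, mem_Wset_one] at huv
    exact (append_cons_mem_Wset_succ hr hi huv.1).mpr huv.2
  · rintro ⟨u, v⟩ huv ⟨u', v'⟩ huv' heq
    simp only [Finset.coe_product, Set.mem_prod, Finset.mem_coe, mem_Wset_one] at huv huv'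
    obtain ⟨rfl, htail⟩ := List.append_inj heq (huv.1.trans huv'.1.symm)
    exact Prod.ext rfl (List.cons.inj htail).2
  · intro w hw
    obtain ⟨u, v, hu, rfl⟩ := exists_eq_append_cons_of_mem_Wset_succ hr hi hw
    have hv := (append_cons_mem_Wset_succ hr hi hu).mp hw
    exact ⟨(u, v), Finset.mem_product.mpr ⟨mem_Wset_one.mpr hu, hv⟩, rfl⟩

theorem IsTreeAut.sum_Wset_one_apply_append {M : Type*} [AddCommMonoid M]
    {σ : List Bool → List Bool} (hσ : IsTreeAut σ) (f : List Bool → M) (x : List Bool) :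
    ∑ u ∈ Wset r 1, f (σ (x ++ u)) = ∑ u ∈ Wset r 1, f (σ x ++ u) := by
  obtain ⟨ρ, hρ, hρσ⟩ := hσ.exists_section x
  refine Finset.sum_bijective ρ hρ.1 (fun u ↦ ?_) fun u _ ↦ by rw [hρσ]
  rw [mem_Wset_one, mem_Wset_one, hρ.2.1]

end Words

theorem summable_padicInt_pow_mul {p : ℕ} [Fact p.Prime] (c : ℕ → ℤ_[p]) :
    Summable fun i ↦ (p : ℤ_[p]) ^ i * c i := by
  refine Summable.of_norm_bounded (summable_geometric_of_lt_one (norm_nonneg (p : ℤ_[p]))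
    ((PadicInt.norm_lt_one_iff_dvd _).mpr dvd_rfl)) fun i ↦ ?_
  rw [norm_mul, norm_pow]
  exact mul_le_of_le_one_right (by positivity) (PadicInt.norm_le_one _)

theorem eq_zero_of_forall_mem_maximalIdeal_mul_span_range {R α : Type*} [CommRing R]
    [IsLocalRing R] [IsNoetherianRing R] {D : α → R}
    (h : ∀ x, D x ∈ IsLocalRing.maximalIdeal R * Ideal.span (Set.range D)) : D = 0 := by
  have hspan : Ideal.span (Set.range D) = ⊥ :=
    Submodule.eq_bot_of_le_smul_of_le_jacobson_bot (IsLocalRing.maximalIdeal R) _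
      (IsNoetherian.noetherian _) (Ideal.span_le.mpr (Set.range_subset_iff.mpr h))
      (IsLocalRing.maximalIdeal_le_jacobson _)
  funext x
  exact Ideal.span_eq_bot.mp hspan _ ⟨x, rfl⟩

section Cocycle

variable {r : ℕ} {σ τ : List Bool → List Bool}

theorem summable_Qr (r : ℕ) (σ : List Bool → List Bool) (x : List Bool) :
    Summable fun i ↦ (2 : ℤ_[2]) ^ (i + 1) * ∑ w ∈ Wset r (i + 1), (par σ (x ++ w) : ℤ_[2]) := by
  have h := summable_padicInt_pow_mul fun i ↦ ∑ w ∈ Wset r i, (par σ (x ++ w) : ℤ_[2])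
  rw [Nat.cast_ofNat] at h
  exact h.comp_injective (add_left_injective 1)

theorem Qr_eq_two_mul_sum (hr : 1 ≤ r) (σ : List Bool → List Bool) (x : List Bool) :
    Qr r σ x = 2 * ∑ u ∈ Wset r 1, (par σ (x ++ u) + Qr r σ (x ++ u ++ [false])) := by
  have hterm (i : ℕ) :
      (2 : ℤ_[2]) ^ (i + 1 + 1) * ∑ w ∈ Wset r (i + 1 + 1), (par σ (x ++ w) : ℤ_[2]) =
        2 * ∑ u ∈ Wset r 1,
          2 ^ (i + 1) * ∑ v ∈ Wset r (i + 1), (par σ (x ++ u ++ [false] ++ v) : ℤ_[2]) := by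
    rw [sum_Wset_succ hr i.succ_pos, ← Finset.mul_sum, pow_succ', mul_assoc]
    simp only [List.append_assoc, List.singleton_append]
  have hsum (u : List Bool) (_ : u ∈ Wset r 1) := summable_Qr r σ (x ++ u ++ [false])
  calc
    Qr r σ x
    _ = 2 * ∑ u ∈ Wset r 1, (par σ (x ++ u) : ℤ_[2]) +
          ∑' i : ℕ, 2 * ∑ u ∈ Wset r 1,
            2 ^ (i + 1) * ∑ v ∈ Wset r (i + 1), (par σ (x ++ u ++ [false] ++ v) : ℤ_[2]) := by
      rw [Qr, (summable_Qr r σ x).tsum_eq_zero_add, zero_add, pow_one, tsum_congr hterm]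
    _ = 2 * ∑ u ∈ Wset r 1, (par σ (x ++ u) : ℤ_[2]) +
          2 * ∑ u ∈ Wset r 1, Qr r σ (x ++ u ++ [false]) := by
      rw [(summable_sum hsum).tsum_mul_left, Summable.tsum_finsetSum hsum]
      simp only [Qr]
    _ = 2 * ∑ u ∈ Wset r 1, (par σ (x ++ u) + Qr r σ (x ++ u ++ [false])) := by
      rw [← mul_add, ← Finset.sum_add_distrib]

theorem eq_Qr_of_eq_two_mul_sum (hr : 1 ≤ r) {F : List Bool → ℤ_[2]}
    (hF : ∀ x, F x = 2 * ∑ u ∈ Wset r 1, (par σ (x ++ u) + F (x ++ u ++ [false]))) :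
    F = Qr r σ := by
  have two_mem : (2 : ℤ_[2]) ∈ IsLocalRing.maximalIdeal ℤ_[2] := by
    rw [PadicInt.maximalIdeal_eq_span_p]
    exact Ideal.mem_span_singleton_self _
  refine sub_eq_zero.mp (eq_zero_of_forall_mem_maximalIdeal_mul_span_range fun x ↦ ?_)
  have hrec : (F - Qr r σ) x = 2 * ∑ u ∈ Wset r 1, (F - Qr r σ) (x ++ u ++ [false]) := by
    simp only [Pi.sub_apply, hF x, Qr_eq_two_mul_sum hr σ x, ← mul_sub, ← Finset.sum_sub_distrib,
      add_sub_add_left_eq_sub]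
  rw [hrec]
  exact Ideal.mul_mem_mul two_mem
    (Ideal.sum_mem _ fun u _ ↦ Ideal.subset_span ⟨x ++ u ++ [false], rfl⟩)

theorem Qr_comp (hr : 1 ≤ r) (hσ : σ ∈ Mset r) (hτ : IsTreeAut τ) (x y : List Bool) :
    Qr r (σ ∘ τ) x = Pr r σ y * Qr r τ x + Qr r σ (τ x) := by
  have hlocal (z : List Bool) :
      par (σ ∘ τ) z + Qr r σ (τ (z ++ [false])) =
        Pr r σ y * par τ z + (par σ (τ z) + Qr r σ (τ z ++ [false])) := by
    rw [hσ.1.par_comp hτ, hτ.apply_map_append_false (Qr r σ), hσ.2 y (τ z), Pr]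
    ring
  refine (congrFun (eq_Qr_of_eq_two_mul_sum hr
    (F := fun x ↦ Pr r σ y * Qr r τ x + Qr r σ (τ x)) fun x ↦ ?_) x).symm
  rw [Qr_eq_two_mul_sum hr τ, Qr_eq_two_mul_sum hr σ,
    ← hτ.sum_Wset_one_apply_append (fun z ↦ (par σ z : ℤ_[2]) + Qr r σ (z ++ [false])),
    mul_left_comm, ← mul_add, Finset.mul_sum, ← Finset.sum_add_distrib]
  congr! 2 with u
  linear_combination -hlocal (x ++ u)

theorem Pr_comp (hr : 1 ≤ r) (hσ : σ ∈ Mset r) (hτ : IsTreeAut τ) (x y : List Bool) :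
    Pr r (σ ∘ τ) x = Pr r σ y * Pr r τ x :=
  calc
    Pr r (σ ∘ τ) x
    _ = (-1) ^ par σ (τ x) * (-1) ^ par τ x +
          Pr r σ y * (Qr r τ (x ++ [true]) - Qr r τ (x ++ [false])) +
          (Qr r σ (τ (x ++ [true])) - Qr r σ (τ (x ++ [false]))) := by
      rw [Pr, hσ.1.neg_one_pow_par_comp hτ, Qr_comp hr hσ hτ _ y, Qr_comp hr hσ hτ _ y]
      ring
    _ = (-1) ^ par τ x * Pr r σ (τ x) +
          Pr r σ y * (Qr r τ (x ++ [true]) - Qr r τ (x ++ [false])) := by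
      rw [hτ.apply_map_append_true_sub (Qr r σ), Pr.eq_1 r σ (τ x)]
      ring
    _ = Pr r σ y * Pr r τ x := by
      rw [hσ.2 (τ x) y, Pr.eq_1 r τ]
      ring

theorem Pr_id (r : ℕ) (x : List Bool) : Pr r id x = 1 := by
  simp [Pr, Qr, par]

theorem id_mem_Mset (r : ℕ) : id ∈ Mset r :=
  ⟨isTreeAut_id, fun x₁ x₂ ↦ (Pr_id r x₁).trans (Pr_id r x₂).symm⟩

theorem comp_mem_Mset (hr : 1 ≤ r) (hσ : σ ∈ Mset r) (hτ : τ ∈ Mset r) : σ ∘ τ ∈ Mset r :=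
  ⟨hσ.1.comp hτ.1, fun x₁ x₂ ↦ by
    rw [Pr_comp hr hσ hτ.1 x₁ [], Pr_comp hr hσ hτ.1 x₂ [], hτ.2 x₁ x₂]⟩

theorem mem_Mset_of_rightInverse (hr : 1 ≤ r) (hσ : σ ∈ Mset r)
    (h : Function.RightInverse τ σ) : τ ∈ Mset r := by
  have hτ : IsTreeAut τ := hσ.1.of_rightInverse h
  have hmul (x : List Bool) : Pr r σ [] * Pr r τ x = 1 := by
    rw [← Pr_comp hr hσ hτ, h.id, Pr_id]
  refine ⟨hτ, fun x₁ x₂ ↦ ?_⟩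
  exact mul_left_cancel₀ (left_ne_zero_of_mul_eq_one (hmul x₁)) ((hmul x₁).trans (hmul x₂).symm)

end Cocycle

/-- For every integer `r ≥ 1`, `M_{r,∞}` is a subgroup of `Aut(T_∞)`:
it contains the identity automorphism and is closed under composition and inversion. -/
theorem Mset_is_subgroup (r : ℕ) (hr : 1 ≤ r) :
    (id ∈ Mset r) ∧
    (∀ σ τ : List Bool → List Bool, σ ∈ Mset r → τ ∈ Mset r → σ ∘ τ ∈ Mset r) ∧
    (∀ σ τ : List Bool → List Bool, σ ∈ Mset r → σ ∘ τ = id → τ ∘ σ = id → τ ∈ Mset r) :=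
  ⟨id_mem_Mset r, fun _ _ hσ hτ ↦ comp_mem_Mset hr hσ hτ,
    fun _ _ hσ hστ _ ↦ mem_Mset_of_rightInverse hr hσ (congrFun hστ)⟩
end
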